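/- arXiv:2003.11636 — 2 statements merged into one kernel-verified Lean document; each statement's English description precedes it below -/
import Mathlib

section
/- Let F and H be two right-continuous filtrations on a complete probability space, each containing all μ-null sets. Assume the σ-algebra F_0 is μ-trivial (every set in F_0 has measure 0 or 1) and that F_∞ := ⨆_{t ≥ 0} F_t and H_∞ := ⨆_{t ≥ 0} H_t are conditionally independent given F_0, i.e., for every A ∈ F_∞ and B ∈ H_∞ one has E[1_A 1_B | F_0] = E[1_A | F_0] · E[1_B | F_0] μ-a.s. Then the filtration F ∨ H (defined by t ↦ F_t ⊔ H_t) is right-continuous: for every t ≥ 0, ⨅_{s > t} (F_s ⊔ H_s) = F_t ⊔ H_t. (Content of Lemma 4.2.) -/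
/-!
Triviality of `F 0` turns conditional independence given `F 0` into plain independence of
`F_∞` and `H_∞` (`indep_of_condIndep_of_trivial`). For `A ∈ F_∞`, `B ∈ H_∞` and `s ≥ t`
independence gives `E[1_A 1_B | F_s ⊔ H_s] = E[1_A | F_s] E[1_B | H_s]`
(`setIntegral_inter_indicator_of_indep`). Along `s ↓ t` both factors converge in `L¹` to
`E[1_A | F_t]` and `E[1_B | H_t]` by right-continuity and Lévy's downward theorem
(`tendsto_eLpNorm_condExp_of_antitone`), which is proved here for square-integrable functions as
convergence of the orthogonal projections onto a decreasing sequence of closed subspaces of `L²`.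

Hence, for `C ∈ ⨅_{s > t} (F_s ⊔ H_s)`,
`μ(C ∩ A ∩ B) = ∫_C E[1_A | F_t] E[1_B | H_t] = ∫_C E[1_A 1_B | F_t ⊔ H_t]
  = ∫_{A ∩ B} E[1_C | F_t ⊔ H_t]`,
the last step by self-adjointness of conditional expectation.
The sets `A ∩ B` form a π-system generating `F_∞ ⊔ H_∞`, so `1_C = E[1_C | F_t ⊔ H_t]` a.e., and
`C ∈ F_t ⊔ H_t` because that σ-algebra contains the null sets.
-/

open MeasureTheory ProbabilityTheory Filter
open scoped NNReal ENNReal Topology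

section Helpers

variable {Ω : Type*} {m0 : MeasurableSpace Ω} {μ : Measure Ω}

/-! ### Lévy's downward theorem -/

/-- For a σ-algebra containing all null sets, measurability is preserved under a.e. equality. -/
lemma measurable_of_ae_eq_of_null {m : MeasurableSpace Ω}
    (hnull : ∀ s : Set Ω, μ s = 0 → MeasurableSet[m] s) {f g : Ω → ℝ}
    (hg : Measurable[m] g) (hfg : f =ᵐ[μ] g) : Measurable[m] f := by
  intro s hs
  have hN : μ {ω | f ω ≠ g ω} = 0 := hfg
  have h1 : f ⁻¹' s = (g ⁻¹' s \ {ω | f ω ≠ g ω}) ∪ (f ⁻¹' s ∩ {ω | f ω ≠ g ω}) := by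
    ext ω
    by_cases h : f ω = g ω <;> simp [h]
  rw [h1]
  exact ((hg hs).diff (hnull _ hN)).union
    (hnull _ (measure_mono_null Set.inter_subset_right hN))

/-- **Lévy's downward theorem** in `L¹`, for square-integrable functions and σ-algebras
containing the null sets. -/
lemma tendsto_eLpNorm_condExp_of_antitone [IsProbabilityMeasure μ]
    (m : ℕ → MeasurableSpace Ω) (hm : ∀ n, m n ≤ m0) (hanti : Antitone m)
    (hnull : ∀ n, ∀ s : Set Ω, μ s = 0 → MeasurableSet[m n] s)
    {f : Ω → ℝ} (hf : MemLp f 2 μ) :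
    Tendsto (fun n => eLpNorm (μ[f | m n] - μ[f | ⨅ n, m n]) 1 μ) atTop (𝓝 0) := by
  have hinf : (⨅ n, m n) ≤ m0 := (iInf_le m 0).trans (hm 0)
  have hfact : ∀ n, Fact (m n ≤ m0) := fun n => ⟨hm n⟩
  have hfact' : Fact ((⨅ n, m n) ≤ m0) := ⟨hinf⟩
  set K : ℕ → Submodule ℝ (Lp ℝ 2 μ) := fun n => lpMeas ℝ ℝ (m n) 2 μ with hK
  set K' : Submodule ℝ (Lp ℝ 2 μ) := lpMeas ℝ ℝ (⨅ n, m n) 2 μ with hK'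
  have : ∀ n, CompleteSpace (K n) := fun n => by rw [hK]; infer_instance
  have : CompleteSpace K' := by rw [hK']; infer_instance
  have hKinf : ⨅ n, K n = K' := by
    ext g
    simp only [hK, hK', Submodule.mem_iInf, mem_lpMeas_iff_aestronglyMeasurable]
    constructor
    · intro h
      have h2 : Measurable[⨅ n, m n] g := by
        have h3 : ∀ n, Measurable[m n] g := fun n => by
          obtain ⟨g', hg', hgg'⟩ := h n
          exact measurable_of_ae_eq_of_null (hnull n) hg'.measurable hgg'
        intro s hs
        rw [MeasurableSpace.measurableSet_iInf]
        exact fun n => h3 n hs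
      exact h2.stronglyMeasurable.aestronglyMeasurable
    · exact fun h n => h.mono (iInf_le m n)
  have hmono : Monotone fun n => (K n)ᗮ := by
    intro i j hij
    refine Submodule.orthogonal_le fun g hg => ?_
    rw [hK, mem_lpMeas_iff_aestronglyMeasurable] at hg ⊢
    exact hg.mono (hanti hij)
  have hcl : (⨆ n, (K n)ᗮ).topologicalClosure = K'ᗮ := by
    rw [← Submodule.orthogonal_orthogonal_eq_closure, ← hKinf, ← Submodule.iInf_orthogonal]
    simp only [Submodule.orthogonal_orthogonal]
  have hlim := Submodule.starProjection_tendsto_closure_iSup (fun n => (K n)ᗮ) hmono hf.toLp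
  simp only [hcl, Submodule.starProjection_orthogonal_val] at hlim
  have hlim2 : Tendsto (fun n => (K n).starProjection hf.toLp) atTop
      (𝓝 (K'.starProjection hf.toLp)) := by
    simpa using hlim.const_sub hf.toLp
  have hP : ∀ n, ((K n).starProjection hf.toLp : Ω → ℝ) =ᵐ[μ] μ[f | m n] := fun n =>
    hf.condExpL2_ae_eq_condExp (𝕜 := ℝ) (hm n)
  have hP' : (K'.starProjection hf.toLp : Ω → ℝ) =ᵐ[μ] μ[f | ⨅ n, m n] :=
    hf.condExpL2_ae_eq_condExp (𝕜 := ℝ) hinf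
  rw [Lp.tendsto_Lp_iff_tendsto_eLpNorm'] at hlim2
  refine tendsto_of_tendsto_of_tendsto_of_le_of_le tendsto_const_nhds hlim2
    (fun _ => zero_le) fun n => ?_
  dsimp only
  rw [← eLpNorm_congr_ae ((hP n).sub hP')]
  exact eLpNorm_le_eLpNorm_of_exponent_le one_le_two
    ((Lp.aestronglyMeasurable _).sub (Lp.aestronglyMeasurable _))

/-! ### Independence and conditional expectation given a join -/

/-- Two integrable functions with equal integrals over the rectangles `A ∩ B` have equal
integrals over every set of `m₁ ⊔ m₂`. -/
lemma setIntegral_eq_of_inter {m₁ m₂ : MeasurableSpace Ω} (h₁ : m₁ ≤ m0) (h₂ : m₂ ≤ m0)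
    {f g : Ω → ℝ} (hf : Integrable f μ) (hg : Integrable g μ)
    (h : ∀ A B, MeasurableSet[m₁] A → MeasurableSet[m₂] B →
      ∫ ω in A ∩ B, f ω ∂μ = ∫ ω in A ∩ B, g ω ∂μ)
    {D : Set Ω} (hD : MeasurableSet[m₁ ⊔ m₂] D) :
    ∫ ω in D, f ω ∂μ = ∫ ω in D, g ω ∂μ := by
  have hle : m₁ ⊔ m₂ ≤ m0 := sup_le h₁ h₂
  have hgen : m₁ ⊔ m₂ = MeasurableSpace.generateFrom
      {s | ∃ A B, MeasurableSet[m₁] A ∧ MeasurableSet[m₂] B ∧ A ∩ B = s} := by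
    refine le_antisymm (sup_le ?_ ?_) (MeasurableSpace.generateFrom_le ?_)
    · exact fun A hA => MeasurableSpace.measurableSet_generateFrom
        ⟨A, Set.univ, hA, .univ, by simp⟩
    · exact fun B hB => MeasurableSpace.measurableSet_generateFrom
        ⟨Set.univ, B, .univ, hB, by simp⟩
    · rintro _ ⟨A, B, hA, hB, rfl⟩
      exact MeasurableSet.inter ((le_sup_left : m₁ ≤ m₁ ⊔ m₂) _ hA)
        ((le_sup_right : m₂ ≤ m₁ ⊔ m₂) _ hB)
  have hpi : IsPiSystem
      {s | ∃ A B, MeasurableSet[m₁] A ∧ MeasurableSet[m₂] B ∧ A ∩ B = s} := by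
    rintro _ ⟨A, B, hA, hB, rfl⟩ _ ⟨A', B', hA', hB', rfl⟩ -
    exact ⟨A ∩ A', B ∩ B', hA.inter hA', hB.inter hB', Set.inter_inter_inter_comm _ _ _ _⟩
  have huniv : ∫ ω, f ω ∂μ = ∫ ω, g ω ∂μ := by
    simpa using h Set.univ Set.univ .univ .univ
  induction D, hD using MeasurableSpace.induction_on_inter hgen hpi with
  | empty => simp
  | basic s hs =>
    obtain ⟨A, B, hA, hB, rfl⟩ := hs
    exact h A B hA hB
  | compl s hs ih =>
    rw [setIntegral_compl (hle _ hs) hf, setIntegral_compl (hle _ hs) hg, ih, huniv]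
  | iUnion s hd hs ih =>
    rw [integral_iUnion (fun i => hle _ (hs i)) hd hf.integrableOn,
      integral_iUnion (fun i => hle _ (hs i)) hd hg.integrableOn]
    exact tsum_congr ih

/-- Conditional independence given a `μ`-trivial σ-algebra is independence, because conditional
expectations given such a σ-algebra are constant. -/
lemma indep_of_condIndep_of_trivial [IsProbabilityMeasure μ] {m m₁ m₂ : MeasurableSpace Ω}
    (hm : m ≤ m0) (h₁ : m₁ ≤ m0) (h₂ : m₂ ≤ m0)
    (h_triv : ∀ A : Set Ω, MeasurableSet[m] A → μ A = 0 ∨ μ A = 1)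
    (h_ci : ∀ A B : Set Ω, MeasurableSet[m₁] A → MeasurableSet[m₂] B →
      μ[fun ω => A.indicator (fun _ => (1 : ℝ)) ω * B.indicator (fun _ => (1 : ℝ)) ω | m]
        =ᵐ[μ] fun ω => (μ[A.indicator (fun _ => (1 : ℝ)) | m]) ω *
          (μ[B.indicator (fun _ => (1 : ℝ)) | m]) ω) :
    Indep m₁ m₂ μ := by
  rw [Indep_iff]
  intro A B hA hB
  have hA' := h₁ _ hA
  have hB' := h₂ _ hB
  have hconst : (fun _ => μ.real A) =ᵐ[μ] μ[A.indicator (fun _ => (1 : ℝ)) | m] := by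
    refine ae_eq_condExp_of_forall_setIntegral_eq hm ((integrable_const _).indicator hA')
      (fun _ _ _ => integrable_const _ |>.integrableOn) (fun s hs _ => ?_)
      aestronglyMeasurable_const
    rcases h_triv s hs with h | h
    · rw [setIntegral_measure_zero _ h, setIntegral_measure_zero _ h]
    · have hs1 : s =ᵐ[μ] Set.univ := by
        rw [ae_eq_univ]
        exact (prob_compl_eq_zero_iff (hm _ hs)).2 h
      rw [Measure.restrict_congr_set hs1]
      simp [integral_indicator hA', measureReal_def]
  have h := integral_congr_ae ((h_ci A B hA hB).trans (hconst.symm.mul (ae_eq_refl _)))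
  simp only [Pi.mul_apply] at h
  rw [integral_condExp hm, integral_const_mul, integral_condExp hm] at h
  have h3 : (fun ω => A.indicator (fun _ => (1 : ℝ)) ω * B.indicator (fun _ => (1 : ℝ)) ω)
      = (A ∩ B).indicator (fun _ => (1 : ℝ)) := by
    ext ω
    rw [← Set.inter_indicator_mul, one_mul]
  rw [h3, integral_indicator (hA'.inter hB'), integral_indicator hB'] at h
  simp only [integral_const, MeasurableSet.univ, measureReal_restrict_apply, Set.univ_inter,
    smul_eq_mul, mul_one] at h
  rw [← ENNReal.toReal_eq_toReal_iff' (by finiteness) (by finiteness), ENNReal.toReal_mul]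
  exact h

/-- The integral form of `E[1_A 1_B | m₁ ⊔ m₂] = E[1_A | m₁] E[1_B | m₂]`, where `m₁ ≤ n₁`,
`m₂ ≤ n₂` and `n₁`, `n₂` are independent. -/
lemma setIntegral_inter_indicator_of_indep [IsProbabilityMeasure μ]
    {m₁ m₂ n₁ n₂ : MeasurableSpace Ω} (hn₁ : n₁ ≤ m0) (hn₂ : n₂ ≤ m0)
    (hmn₁ : m₁ ≤ n₁) (hmn₂ : m₂ ≤ n₂) (hind : Indep n₁ n₂ μ)
    {A B C : Set Ω} (hA : MeasurableSet[n₁] A) (hB : MeasurableSet[n₂] B)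
    (hC : MeasurableSet[m₁ ⊔ m₂] C) :
    ∫ ω in C, (A ∩ B).indicator (fun _ => (1 : ℝ)) ω ∂μ =
      ∫ ω in C, (μ[A.indicator (fun _ => (1 : ℝ)) | m₁]) ω *
        (μ[B.indicator (fun _ => (1 : ℝ)) | m₂]) ω ∂μ := by
  have h₁ := hmn₁.trans hn₁
  have h₂ := hmn₂.trans hn₂
  have hA0 := hn₁ _ hA
  have hB0 := hn₂ _ hB
  have iA : Integrable (A.indicator (fun _ => (1 : ℝ))) μ := (integrable_const _).indicator hA0
  have iB : Integrable (B.indicator (fun _ => (1 : ℝ))) μ := (integrable_const _).indicator hB0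
  -- Independence makes the product of an `n₁`- and an `n₂`-measurable function integrate to the
  -- product of the integrals.
  have hindf : ∀ f g : Ω → ℝ, Measurable[n₁] f → Measurable[n₂] g → IndepFun f g μ := by
    intro f g hf hg
    exact indep_of_indep_of_le_left (indep_of_indep_of_le_right hind hg.comap_le) hf.comap_le
  have hmA : Measurable[n₁] (μ[A.indicator (fun _ => (1 : ℝ)) | m₁]) :=
    stronglyMeasurable_condExp.measurable.mono hmn₁ le_rfl
  have hmB : Measurable[n₂] (μ[B.indicator (fun _ => (1 : ℝ)) | m₂]) :=
    stronglyMeasurable_condExp.measurable.mono hmn₂ le_rfl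
  refine setIntegral_eq_of_inter h₁ h₂ ((integrable_const _).indicator (hA0.inter hB0))
    ((hindf _ _ hmA hmB).integrable_mul integrable_condExp integrable_condExp) ?_ hC
  intro A' B' hA' hB'
  have key : ∀ f g : Ω → ℝ, Measurable[n₁] f → Measurable[n₂] g →
      ∫ ω in A' ∩ B', f ω * g ω ∂μ = (∫ ω in A', f ω ∂μ) * ∫ ω in B', g ω ∂μ := by
    intro f g hf hg
    rw [← integral_indicator ((h₁ _ hA').inter (h₂ _ hB')), ← integral_indicator (h₁ _ hA'),
      ← integral_indicator (h₂ _ hB')]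
    have hf' := hf.indicator (hmn₁ _ hA')
    have hg' := hg.indicator (hmn₂ _ hB')
    rw [← (hindf _ _ hf' hg').integral_fun_mul_eq_mul_integral
      (hf'.mono hn₁ le_rfl).aestronglyMeasurable (hg'.mono hn₂ le_rfl).aestronglyMeasurable]
    simp only [Set.inter_indicator_mul]
  have hprod : (A ∩ B).indicator (fun _ => (1 : ℝ)) =
      fun ω => A.indicator (fun _ => (1 : ℝ)) ω * B.indicator (fun _ => (1 : ℝ)) ω := by
    ext ω
    rw [← Set.inter_indicator_mul, one_mul]
  simp only [Pi.mul_apply]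
  rw [hprod, key _ _ (measurable_const.indicator hA) (measurable_const.indicator hB),
    key _ _ hmA hmB, setIntegral_condExp h₁ iA hA', setIntegral_condExp h₂ iB hB']

/-! ### Passage to the limit and recovery of measurability -/

/-- If `E[1_C | M]` has the same integrals as `1_C` over the rectangles generating a σ-algebra that
contains both `C` and `M`, and `M` contains the null sets, then `C ∈ M`. -/
lemma measurableSet_of_setIntegral_condExp [IsProbabilityMeasure μ]
    {M n₁ n₂ : MeasurableSpace Ω} (hn₁ : n₁ ≤ m0) (hn₂ : n₂ ≤ m0) (hM : M ≤ n₁ ⊔ n₂)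
    (hnull : ∀ s : Set Ω, μ s = 0 → MeasurableSet[M] s) {C : Set Ω}
    (hC : MeasurableSet[n₁ ⊔ n₂] C)
    (h : ∀ A B, MeasurableSet[n₁] A → MeasurableSet[n₂] B →
      ∫ ω in A ∩ B, (μ[C.indicator (fun _ => (1 : ℝ)) | M]) ω ∂μ =
        ∫ ω in A ∩ B, C.indicator (fun _ => (1 : ℝ)) ω ∂μ) :
    MeasurableSet[M] C := by
  have hn : n₁ ⊔ n₂ ≤ m0 := sup_le hn₁ hn₂
  have iC : Integrable (C.indicator (fun _ => (1 : ℝ))) μ :=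
    (integrable_const _).indicator (hn _ hC)
  have h1 : μ[C.indicator (fun _ => (1 : ℝ)) | M] =ᵐ[μ]
      μ[C.indicator (fun _ => (1 : ℝ)) | n₁ ⊔ n₂] :=
    ae_eq_condExp_of_forall_setIntegral_eq hn iC
      (fun _ _ _ => integrable_condExp.integrableOn)
      (fun D hD _ => setIntegral_eq_of_inter hn₁ hn₂ integrable_condExp iC h hD)
      (stronglyMeasurable_condExp.mono hM).aestronglyMeasurable
  rw [condExp_of_stronglyMeasurable hn
    (Measurable.indicator measurable_const hC).stronglyMeasurable iC] at h1
  have h2 : Measurable[M] (C.indicator (fun _ => (1 : ℝ))) :=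
    measurable_of_ae_eq_of_null hnull stronglyMeasurable_condExp.measurable h1.symm
  exact (measurable_indicator_const_iff (1 : ℝ)).1 h2

/-- If `f n → f'` and `g n → g'` in `L¹`, and `f n` and `g'` take values in `[-1, 1]` a.e., then the
integrals of the products `f n * g n` over any set converge. -/
lemma tendsto_setIntegral_mul_of_bdd [IsProbabilityMeasure μ] {f g : ℕ → Ω → ℝ} {f' g' : Ω → ℝ}
    (hf : ∀ n, Integrable (f n) μ) (hg : ∀ n, Integrable (g n) μ)
    (hf' : Integrable f' μ) (hg' : Integrable g' μ)
    (bf : ∀ n, ∀ᵐ ω ∂μ, |f n ω| ≤ 1) (bg' : ∀ᵐ ω ∂μ, |g' ω| ≤ 1)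
    (tf : Tendsto (fun n => eLpNorm (f n - f') 1 μ) atTop (𝓝 0))
    (tg : Tendsto (fun n => eLpNorm (g n - g') 1 μ) atTop (𝓝 0)) (C : Set Ω) :
    Tendsto (fun n => ∫ ω in C, f n ω * g n ω ∂μ) atTop (𝓝 (∫ ω in C, f' ω * g' ω ∂μ)) := by
  refine tendsto_setIntegral_of_L1' (fun ω => f' ω * g' ω)
    (hf'.aestronglyMeasurable.mul hg'.aestronglyMeasurable)
    (Eventually.of_forall fun n => (hg n).bdd_mul (hf n).aestronglyMeasurable (bf n)) ?_ C
  have hsum := tg.add tf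
  rw [add_zero] at hsum
  refine tendsto_of_tendsto_of_tendsto_of_le_of_le tendsto_const_nhds hsum
    (fun _ => zero_le) fun n => ?_
  have hsplit : ((fun ω => f n ω * g n ω) - fun ω => f' ω * g' ω) =
      (fun ω => f n ω * (g n - g') ω) + fun ω => (f n - f') ω * g' ω := by
    ext ω
    simp only [Pi.sub_apply, Pi.add_apply]
    ring
  have hdf := (hf n).aestronglyMeasurable.sub hf'.aestronglyMeasurable
  have hdg := (hg n).aestronglyMeasurable.sub hg'.aestronglyMeasurable
  dsimp only
  rw [hsplit]
  refine (eLpNorm_add_le ((hf n).aestronglyMeasurable.mul hdg)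
    (hdf.mul hg'.aestronglyMeasurable) le_rfl).trans (add_le_add ?_ ?_)
  · refine eLpNorm_mono_ae ?_
    filter_upwards [bf n] with ω h
    rw [Pi.mul_apply, norm_mul]
    exact mul_le_of_le_one_left (norm_nonneg _) h
  · refine eLpNorm_mono_ae ?_
    filter_upwards [bg'] with ω h
    rw [Pi.mul_apply, norm_mul]
    exact mul_le_of_le_one_right (norm_nonneg _) h

lemma abs_condExp_indicator_le_one (m : MeasurableSpace Ω) (A : Set Ω) :
    ∀ᵐ ω ∂μ, |(μ[A.indicator (fun _ => (1 : ℝ)) | m]) ω| ≤ 1 := by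
  refine ae_bdd_abs_condExp_of_ae_bdd_abs (ae_of_all _ fun ω => ?_)
  by_cases h : ω ∈ A <;> simp [h]

/-- Conditional expectation is self-adjoint. -/
lemma setIntegral_condExp_indicator_comm [IsProbabilityMeasure μ] {M : MeasurableSpace Ω}
    (hM : M ≤ m0) {C D : Set Ω} (hC : MeasurableSet[m0] C)
    (hD : MeasurableSet[m0] D) :
    ∫ ω in D, (μ[C.indicator (fun _ => (1 : ℝ)) | M]) ω ∂μ =
      ∫ ω in C, (μ[D.indicator (fun _ => (1 : ℝ)) | M]) ω ∂μ := by
  have key : ∀ {C D : Set Ω}, MeasurableSet[m0] D →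
      ∫ ω in D, (μ[C.indicator (fun _ => (1 : ℝ)) | M]) ω ∂μ =
        ∫ ω, (μ[D.indicator (fun _ => (1 : ℝ)) | M] * μ[C.indicator (fun _ => (1 : ℝ)) | M]) ω
          ∂μ := by
    intro C D hD
    have iD : Integrable (D.indicator (fun _ => (1 : ℝ))) μ := (integrable_const _).indicator hD
    have hprod : D.indicator (μ[C.indicator (fun _ => (1 : ℝ)) | M]) =
        D.indicator (fun _ => (1 : ℝ)) * μ[C.indicator (fun _ => (1 : ℝ)) | M] := by
      ext ω
      by_cases h : ω ∈ D <;> simp [h]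
    have hpull := condExp_mul_of_stronglyMeasurable_right
      (stronglyMeasurable_condExp (f := C.indicator (fun _ => (1 : ℝ))) (m := M) (μ := μ))
      (hprod ▸ integrable_condExp.indicator hD) iD
    rw [← integral_indicator hD, hprod, ← integral_condExp hM]
    exact integral_congr_ae hpull
  rw [key hD, key hC]
  simp only [mul_comm]

end Helpers

/-! ### Right-continuity of the join -/

/-- **Lemma 4.2.** Let `F` and `H` be right-continuous filtrations on a complete
probability space, each containing all `μ`-null sets. If `F 0` is `μ`-trivial and `F_∞`
and `H_∞` are conditionally independent given `F 0`, then the filtration `F ∨ H` is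
right-continuous. -/
theorem rightContinuous_sup_of_condIndep
    {Ω : Type*} {m : MeasurableSpace Ω} {μ : Measure Ω}
    [IsProbabilityMeasure μ] [μ.IsComplete]
    (F H : Filtration ℝ≥0 m)
    (hF_rc : ∀ t : ℝ≥0, ⨅ s ∈ Set.Ioi t, F s = F t)
    (hH_rc : ∀ t : ℝ≥0, ⨅ s ∈ Set.Ioi t, H s = H t)
    (hF_null : ∀ s : Set Ω, μ s = 0 → ∀ t : ℝ≥0, MeasurableSet[F t] s)
    (hH_null : ∀ s : Set Ω, μ s = 0 → ∀ t : ℝ≥0, MeasurableSet[H t] s)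
    (h_triv : ∀ A : Set Ω, MeasurableSet[F 0] A → μ A = 0 ∨ μ A = 1)
    (h_ci : ∀ A B : Set Ω,
      MeasurableSet[⨆ t : ℝ≥0, F t] A → MeasurableSet[⨆ t : ℝ≥0, H t] B →
      μ[fun ω => A.indicator (fun _ => (1 : ℝ)) ω * B.indicator (fun _ => (1 : ℝ)) ω | F 0]
        =ᵐ[μ] fun ω => (μ[A.indicator (fun _ => (1 : ℝ)) | F 0]) ω *
          (μ[B.indicator (fun _ => (1 : ℝ)) | F 0]) ω) :
    ∀ t : ℝ≥0, ⨅ s ∈ Set.Ioi t, (F s ⊔ H s) = F t ⊔ H t := by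
  intro t
  apply le_antisymm
  swap
  · exact le_iInf₂ fun s hs => sup_le_sup (F.mono (le_of_lt hs)) (H.mono (le_of_lt hs))
  intro C hC
  have hF_le : (⨆ s, F s) ≤ m := iSup_le F.le
  have hH_le : (⨆ s, H s) ≤ m := iSup_le H.le
  have hind : Indep (⨆ s, F s) (⨆ s, H s) μ :=
    indep_of_condIndep_of_trivial (F.le 0) hF_le hH_le h_triv h_ci
  obtain ⟨u, hu_anti, hu_gt, hu_lim⟩ := exists_seq_strictAnti_tendsto t
  have hseq : ∀ G : Filtration ℝ≥0 m, (⨅ s ∈ Set.Ioi t, G s = G t) → ⨅ n, G (u n) = G t := by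
    intro G hG
    refine le_antisymm ?_ (le_iInf fun n => G.mono (hu_gt n).le)
    rw [← hG]
    refine le_iInf₂ fun s hs => ?_
    obtain ⟨n, hn⟩ := (hu_lim.eventually_lt_const hs).exists
    exact (iInf_le _ n).trans (G.mono hn.le)
  have hC_mem : ∀ s, t < s → MeasurableSet[F s ⊔ H s] C := fun s hs =>
    (iInf₂_le s hs : ⨅ s ∈ Set.Ioi t, (F s ⊔ H s) ≤ _) _ hC
  have hM : F t ⊔ H t ≤ m := sup_le (F.le t) (H.le t)
  have hC0 : MeasurableSet[m] C :=
    sup_le (F.le _) (H.le _) _ (hC_mem (u 0) (hu_gt 0))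
  refine measurableSet_of_setIntegral_condExp hF_le hH_le
    (sup_le_sup (le_iSup (fun s => F s) t) (le_iSup (fun s => H s) t))
    (fun s hs => (le_sup_left : F t ≤ F t ⊔ H t) _ (hF_null s hs t))
    (sup_le_sup (le_iSup (fun s => F s) (u 0)) (le_iSup (fun s => H s) (u 0)) _
      (hC_mem (u 0) (hu_gt 0))) fun A B hA hB => ?_
  have hA0 := hF_le _ hA
  have hB0 := hH_le _ hB
  have hAB0 := hA0.inter hB0
  have i1 : ∀ {D : Set Ω}, MeasurableSet[m] D → Integrable (D.indicator (fun _ => (1 : ℝ))) μ :=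
    fun hD => (integrable_const _).indicator hD
  have tf : Tendsto (fun n => eLpNorm (μ[A.indicator (fun _ => (1 : ℝ)) | F (u n)] -
      μ[A.indicator (fun _ => (1 : ℝ)) | F t]) 1 μ) atTop (𝓝 0) := by
    rw [← hseq F (hF_rc t)]
    exact tendsto_eLpNorm_condExp_of_antitone (fun n => F (u n)) (fun n => F.le _)
      (fun _ _ h => F.mono (hu_anti.antitone h)) (fun n s hs => hF_null s hs _)
      ((memLp_const _).indicator hA0)
  have tg : Tendsto (fun n => eLpNorm (μ[B.indicator (fun _ => (1 : ℝ)) | H (u n)] -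
      μ[B.indicator (fun _ => (1 : ℝ)) | H t]) 1 μ) atTop (𝓝 0) := by
    rw [← hseq H (hH_rc t)]
    exact tendsto_eLpNorm_condExp_of_antitone (fun n => H (u n)) (fun n => H.le _)
      (fun _ _ h => H.mono (hu_anti.antitone h)) (fun n s hs => hH_null s hs _)
      ((memLp_const _).indicator hB0)
  have hrect : ∀ s {D : Set Ω}, MeasurableSet[F s ⊔ H s] D →
      ∫ ω in D, (A ∩ B).indicator (fun _ => (1 : ℝ)) ω ∂μ =
        ∫ ω in D, (μ[A.indicator (fun _ => (1 : ℝ)) | F s]) ω *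
          (μ[B.indicator (fun _ => (1 : ℝ)) | H s]) ω ∂μ := fun s D hD =>
    setIntegral_inter_indicator_of_indep hF_le hH_le (le_iSup (fun s => F s) s)
      (le_iSup (fun s => H s) s) hind hA hB hD
  set φ : Ω → ℝ := fun ω => (μ[A.indicator (fun _ => (1 : ℝ)) | F t]) ω *
    (μ[B.indicator (fun _ => (1 : ℝ)) | H t]) ω with hφ
  -- `C` lies in every `F (u n) ⊔ H (u n)`, so the left side does not depend on `n`.
  have hlim : ∫ ω in C, (A ∩ B).indicator (fun _ => (1 : ℝ)) ω ∂μ = ∫ ω in C, φ ω ∂μ := by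
    refine tendsto_nhds_unique (tendsto_const_nhds (f := (atTop : Filter ℕ))) ?_
    refine (tendsto_setIntegral_mul_of_bdd (fun n => integrable_condExp)
      (fun n => integrable_condExp) integrable_condExp integrable_condExp
      (fun n => abs_condExp_indicator_le_one (F (u n)) A)
      (abs_condExp_indicator_le_one (H t) B) tf tg C).congr fun n => ?_
    exact (hrect (u n) (hC_mem _ (hu_gt n))).symm
  have iφ : Integrable φ μ :=
    Integrable.bdd_mul integrable_condExp integrable_condExp.aestronglyMeasurable
      (abs_condExp_indicator_le_one (F t) A)
  have hφm : StronglyMeasurable[F t ⊔ H t] φ :=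
    (stronglyMeasurable_condExp.mono le_sup_left).mul (stronglyMeasurable_condExp.mono le_sup_right)
  have hφc : φ =ᵐ[μ] μ[(A ∩ B).indicator (fun _ => (1 : ℝ)) | F t ⊔ H t] :=
    ae_eq_condExp_of_forall_setIntegral_eq hM (i1 hAB0) (fun _ _ _ => iφ.integrableOn)
      (fun D hD _ => (hrect t hD).symm) hφm.aestronglyMeasurable
  rw [setIntegral_condExp_indicator_comm hM hC0 hAB0,
    setIntegral_congr_ae hC0 (hφc.symm.mono fun ω h _ => h), ← hlim,
    setIntegral_indicator hAB0, setIntegral_indicator hC0, Set.inter_comm]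
end

section
/- Let F and H be two right-continuous filtrations on a probability space and assume F and H are independent. Let M be an F-martingale with E[M_t²] < ∞ for every t, and let N be an H-martingale with E[N_t²] < ∞ for every t. Then the pointwise product M N is a martingale with respect to the filtration G = F ∨ H (where G_t = F_t ⊔ H_t) and it is square-integrable with E[(M_t N_t)²] = E[M_t²] · E[N_t²] for every t. (Square-integrable product martingale, used in Step 1 of the proof of Theorem 3.4.) -/
/-!
The martingale property comes from a factorisation of conditional expectations: if `X` and `Y` are
integrable and measurable with respect to independent σ-algebras `m₁'` and `m₂'`, and `m₁ ≤ m₁'`,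
`m₂ ≤ m₂'`, then `E[X Y | m₁ ⊔ m₂] = E[X | m₁] E[Y | m₂]` (`condExp_mul_sup_of_indep`). On a
rectangle `A ∩ B` with `A ∈ m₁` and `B ∈ m₂`, independence splits both set integrals into products
whose factors agree by the definition of conditional expectation; such rectangles form a π-system
generating `m₁ ⊔ m₂`, so Dynkin's lemma extends the equality to all of `m₁ ⊔ m₂`
(`setIntegral_eq_of_sup`). The second-moment claims are independence applied to `M_t²` and `N_t²`.
-/

open MeasureTheory ProbabilityTheory Filter
open scoped NNReal

/-- Dynkin argument: set integrals that agree on the rectangles `A ∩ B` with `A ∈ m₁`, `B ∈ m₂`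
agree on all of `m₁ ⊔ m₂`. -/
lemma setIntegral_eq_of_sup {Ω : Type*} {m₁ m₂ m : MeasurableSpace Ω} {μ : Measure Ω}
    (h₁ : m₁ ≤ m) (h₂ : m₂ ≤ m) {f g : Ω → ℝ} (hf : Integrable f μ) (hg : Integrable g μ)
    (hfg : ∀ A B, MeasurableSet[m₁] A → MeasurableSet[m₂] B →
      ∫ ω in A ∩ B, f ω ∂μ = ∫ ω in A ∩ B, g ω ∂μ)
    {s : Set Ω} (hs : MeasurableSet[m₁ ⊔ m₂] s) :
    ∫ ω in s, f ω ∂μ = ∫ ω in s, g ω ∂μ := by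
  have hle : m₁ ⊔ m₂ ≤ m := sup_le h₁ h₂
  set C : Set (Set Ω) := {s | ∃ A B, MeasurableSet[m₁] A ∧ MeasurableSet[m₂] B ∧ s = A ∩ B}
    with hC
  have hgen : m₁ ⊔ m₂ = MeasurableSpace.generateFrom C := by
    apply le_antisymm
    · refine sup_le (fun A hA => ?_) (fun B hB => ?_)
      · exact MeasurableSpace.measurableSet_generateFrom
          ⟨A, Set.univ, hA, @MeasurableSet.univ _ m₂, (Set.inter_univ A).symm⟩
      · exact MeasurableSpace.measurableSet_generateFrom
          ⟨Set.univ, B, @MeasurableSet.univ _ m₁, hB, (Set.univ_inter B).symm⟩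
    · refine MeasurableSpace.generateFrom_le ?_
      rintro _ ⟨A, B, hA, hB, rfl⟩
      exact @MeasurableSet.inter _ (m₁ ⊔ m₂) _ _
        ((le_sup_left : m₁ ≤ m₁ ⊔ m₂) _ hA) ((le_sup_right : m₂ ≤ m₁ ⊔ m₂) _ hB)
  have hpi : IsPiSystem C := by
    rintro _ ⟨A, B, hA, hB, rfl⟩ _ ⟨A', B', hA', hB', rfl⟩ -
    exact ⟨A ∩ A', B ∩ B', @MeasurableSet.inter _ m₁ _ _ hA hA',
      @MeasurableSet.inter _ m₂ _ _ hB hB', Set.inter_inter_inter_comm A B A' B'⟩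
  have huniv : ∫ ω, f ω ∂μ = ∫ ω, g ω ∂μ := by
    simpa using hfg Set.univ Set.univ (@MeasurableSet.univ _ m₁) (@MeasurableSet.univ _ m₂)
  induction s, hs using MeasurableSpace.induction_on_inter hgen hpi with
  | empty => simp
  | basic t ht =>
    obtain ⟨A, B, hA, hB, rfl⟩ := ht
    exact hfg A B hA hB
  | compl t ht ih =>
    rw [setIntegral_compl (hle _ ht) hf, setIntegral_compl (hle _ ht) hg, ih, huniv]
  | iUnion t hd ht ih =>
    rw [integral_iUnion (fun i => hle _ (ht i)) hd hf.integrableOn,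
      integral_iUnion (fun i => hle _ (ht i)) hd hg.integrableOn]
    exact tsum_congr ih

lemma indepFun_of_indep {Ω : Type*} {m₁ m₂ m : MeasurableSpace Ω} {μ : Measure Ω}
    (h : Indep m₁ m₂ μ) {X Y : Ω → ℝ} (hX : StronglyMeasurable[m₁] X)
    (hY : StronglyMeasurable[m₂] Y) : IndepFun X Y μ :=
  (IndepFun_iff_Indep X Y μ).2
    (indep_of_indep_of_le_left (indep_of_indep_of_le_right h hY.measurable.comap_le)
      hX.measurable.comap_le)

/-- Set integrals over rectangles factor, since `1_{A ∩ B} X Y = (1_A X) (1_B Y)` and the two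
factors are independent. -/
lemma setIntegral_inter_mul_of_indep {Ω : Type*} {m₁ m₂ m : MeasurableSpace Ω} {μ : Measure Ω}
    (h₁ : m₁ ≤ m) (h₂ : m₂ ≤ m) (h : Indep m₁ m₂ μ) {X Y : Ω → ℝ}
    (hX : StronglyMeasurable[m₁] X) (hY : StronglyMeasurable[m₂] Y) {A B : Set Ω}
    (hA : MeasurableSet[m₁] A) (hB : MeasurableSet[m₂] B) :
    ∫ ω in A ∩ B, X ω * Y ω ∂μ = (∫ ω in A, X ω ∂μ) * ∫ ω in B, Y ω ∂μ := by
  rw [← integral_indicator (h₁ _ hA), ← integral_indicator (h₂ _ hB),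
    ← integral_indicator ((h₁ _ hA).inter (h₂ _ hB))]
  simp only [Set.inter_indicator_mul]
  have hXA := hX.indicator hA
  have hYB := hY.indicator hB
  exact (indepFun_of_indep h hXA hYB).integral_fun_mul_eq_mul_integral
    (hXA.mono h₁).aestronglyMeasurable (hYB.mono h₂).aestronglyMeasurable

/-- Conditional expectations of products factor under independence. The σ-algebras `m₁'`, `m₂'`
carrying the independence may be strictly larger than the conditioning ones, as needed to condition
`M_t N_t` on the past at time `s ≤ t`. -/
lemma condExp_mul_sup_of_indep {Ω : Type*} {m₁ m₂ m₁' m₂' m : MeasurableSpace Ω}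
    {μ : Measure Ω} [IsProbabilityMeasure μ] (h₁ : m₁ ≤ m₁') (h₂ : m₂ ≤ m₂')
    (h₁' : m₁' ≤ m) (h₂' : m₂' ≤ m) (h : Indep m₁' m₂' μ) {X Y : Ω → ℝ}
    (hX : StronglyMeasurable[m₁'] X) (hY : StronglyMeasurable[m₂'] Y)
    (hXi : Integrable X μ) (hYi : Integrable Y μ) :
    μ[fun ω => X ω * Y ω | m₁ ⊔ m₂] =ᵐ[μ] fun ω => (μ[X | m₁]) ω * (μ[Y | m₂]) ω := by
  have hle₁ := h₁.trans h₁'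
  have hle₂ := h₂.trans h₂'
  have hEX : StronglyMeasurable[m₁] (μ[X | m₁]) := stronglyMeasurable_condExp
  have hEY : StronglyMeasurable[m₂] (μ[Y | m₂]) := stronglyMeasurable_condExp
  have hint : Integrable (fun ω => X ω * Y ω) μ :=
    (indepFun_of_indep h hX hY).integrable_mul hXi hYi
  have hEint : Integrable (fun ω => (μ[X | m₁]) ω * (μ[Y | m₂]) ω) μ :=
    (indepFun_of_indep h (hEX.mono h₁) (hEY.mono h₂)).integrable_mul
      integrable_condExp integrable_condExp
  refine (ae_eq_condExp_of_forall_setIntegral_eq (sup_le hle₁ hle₂) hint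
    (fun _ _ _ => hEint.integrableOn) (fun s hs _ => ?_) ?_).symm
  · refine setIntegral_eq_of_sup hle₁ hle₂ hEint hint (fun A B hA hB => ?_) hs
    rw [setIntegral_inter_mul_of_indep h₁' h₂' h (hEX.mono h₁) (hEY.mono h₂) (h₁ _ hA) (h₂ _ hB),
      setIntegral_inter_mul_of_indep h₁' h₂' h hX hY (h₁ _ hA) (h₂ _ hB),
      setIntegral_condExp hle₁ hXi hA, setIntegral_condExp hle₂ hYi hB]
  · exact ((hEX.mono le_sup_left).mul (hEY.mono le_sup_right)).aestronglyMeasurable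

/-- **Square-integrable product martingale** (Step 1 of the proof of Theorem 3.4). If `F`
and `H` are independent right-continuous filtrations, `M` is a square-integrable
`F`-martingale and `N` is a square-integrable `H`-martingale, then the product `M N` is a
martingale with respect to `G = F ∨ H` which is square-integrable with
`E[(M_t N_t)²] = E[M_t²] · E[N_t²]` for every `t`. -/
theorem martingale_mul_sq_integrable_of_indep
    {Ω : Type*} {m : MeasurableSpace Ω} {μ : Measure Ω} [IsProbabilityMeasure μ]
    (F H : Filtration ℝ≥0 m)
    (hF_rc : ∀ t : ℝ≥0, ⨅ s ∈ Set.Ioi t, F s = F t)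
    (hH_rc : ∀ t : ℝ≥0, ⨅ s ∈ Set.Ioi t, H s = H t)
    (h_indep : Indep (⨆ t : ℝ≥0, F t) (⨆ t : ℝ≥0, H t) μ)
    (M N : ℝ≥0 → Ω → ℝ)
    (hM : Martingale M F μ) (hN : Martingale N H μ)
    (hM2 : ∀ t : ℝ≥0, Integrable (fun ω => (M t ω) ^ 2) μ)
    (hN2 : ∀ t : ℝ≥0, Integrable (fun ω => (N t ω) ^ 2) μ) :
    Martingale (fun t ω => M t ω * N t ω) (F ⊔ H) μ ∧
    (∀ t : ℝ≥0, Integrable (fun ω => (M t ω * N t ω) ^ 2) μ) ∧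
    (∀ t : ℝ≥0, ∫ ω, (M t ω * N t ω) ^ 2 ∂μ
      = (∫ ω, (M t ω) ^ 2 ∂μ) * ∫ ω, (N t ω) ^ 2 ∂μ) := by
  have hF : ∀ t, F t ≤ ⨆ t, F t := fun t => le_iSup (fun t => F t) t
  have hH : ∀ t, H t ≤ ⨆ t, H t := fun t => le_iSup (fun t => H t) t
  have hF' : (⨆ t, F t) ≤ m := iSup_le F.le
  have hH' : (⨆ t, H t) ≤ m := iSup_le H.le
  have hMm : ∀ t, StronglyMeasurable[⨆ t, F t] (M t) := fun t =>
    (hM.stronglyMeasurable t).mono (hF t)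
  have hNm : ∀ t, StronglyMeasurable[⨆ t, H t] (N t) := fun t =>
    (hN.stronglyMeasurable t).mono (hH t)
  have hsq : ∀ t, IndepFun (fun ω => M t ω ^ 2) (fun ω => N t ω ^ 2) μ := fun t =>
    indepFun_of_indep h_indep ((hMm t).pow 2) ((hNm t).pow 2)
  refine ⟨⟨fun t => ?_, fun s t hst => ?_⟩, fun t => ?_, fun t => ?_⟩
  · exact ((hM.stronglyMeasurable t).mono (le_sup_left : F t ≤ F t ⊔ H t)).mul
      ((hN.stronglyMeasurable t).mono (le_sup_right : H t ≤ F t ⊔ H t))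
  · have hprod : μ[fun ω => M t ω * N t ω | F s ⊔ H s]
        =ᵐ[μ] fun ω => (μ[M t | F s]) ω * (μ[N t | H s]) ω :=
      condExp_mul_sup_of_indep (hF s) (hH s) hF' hH' h_indep (hMm t) (hNm t)
        (hM.integrable t) (hN.integrable t)
    refine hprod.trans ?_
    filter_upwards [hM.condExp_ae_eq hst, hN.condExp_ae_eq hst] with ω hω hω'
    rw [hω, hω']
  · simp only [mul_pow]
    exact (hsq t).integrable_mul (hM2 t) (hN2 t)
  · simp only [mul_pow]
    exact (hsq t).integral_fun_mul_eq_mul_integral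
      (hM2 t).aestronglyMeasurable (hN2 t).aestronglyMeasurable
end
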